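/- Let (A, 𝔪, k) be a commutative Noetherian local ring, let M be a finitely generated A-module having free reducible complexity, and let t be a natural number. If for every finitely generated A-module N having free reducible complexity with cx N = t one has Ext^i_A(M,N) = 0 for all i ≫ 0, then cx M < t. -/

import Mathlib

open CategoryTheory Opposite Filter IsLocalRing

universe u

namespace ComplexityTest

variable (A : Type u) [CommRing A] [IsLocalRing A]

structure MinFreeRes (M : Type u) [AddCommGroup M] [Module A M] : Type u where
  b : ℕ → ℕ
  d : (n : ℕ) → ((Fin (b (n + 1)) → A) →ₗ[A] (Fin (b n) → A))
  aug : (Fin (b 0) → A) →ₗ[A] M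
  aug_surjective : Function.Surjective aug
  exact_zero : Function.Exact (d 0) aug
  exact_succ : ∀ n, Function.Exact (d (n + 1)) (d n)
  minimal : ∀ n x i, d n x i ∈ maximalIdeal A

variable (M : Type u) [AddCommGroup M] [Module A M]

def HasComplexityLE (t : ℕ) : Prop :=
  ∃ (R : MinFreeRes A M) (a : ℝ), ∀ᶠ n : ℕ in atTop, (R.b n : ℝ) ≤ a * (n : ℝ) ^ ((t : ℤ) - 1)

noncomputable def complexity : ℕ∞ :=
  sInf {c : ℕ∞ | ∃ t : ℕ, c = t ∧ HasComplexityLE A M t}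

def HasProjDimLE (t : ℕ) : Prop :=
  ∃ R : MinFreeRes A M, ∀ i, t < i → R.b i = 0

noncomputable def projDim : ℕ∞ :=
  sInf {c : ℕ∞ | ∃ t : ℕ, c = t ∧ HasProjDimLE A M t}

def HasFiniteProjDim : Prop :=
  ∃ t : ℕ, HasProjDimLE A M t

def IsSyzygyOf (S : Type u) [AddCommGroup S] [Module A S] : ℕ → Prop
  | 0 => Nonempty (S ≃ₗ[A] M)
  | 1 => ∃ R : MinFreeRes A M, Nonempty (S ≃ₗ[A] (LinearMap.ker R.aug))
  | (n + 2) => ∃ R : MinFreeRes A M, Nonempty (S ≃ₗ[A] (LinearMap.ker (R.d n)))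

variable {A M} in
def IsSES {K S : Type u} [AddCommGroup K] [Module A K] [AddCommGroup S] [Module A S]
    (f : M →ₗ[A] K) (g : K →ₗ[A] S) : Prop :=
  Function.Injective f ∧ Function.Exact f g ∧ Function.Surjective g

noncomputable def extModule (n : ℕ) (N : Type u) [AddCommGroup N] [Module A N] :
    ModuleCat A :=
  ((_root_.Ext A (ModuleCat.{u} A) n).obj (op (ModuleCat.of A M))).obj (ModuleCat.of A N)

def extVanish (n : ℕ) (N : Type u) [AddCommGroup N] [Module A N] : Prop :=
  Subsingleton (extModule A M n N)

/-- The `n`-th Tor module `Tor^A_n(M, N)`. -/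
noncomputable def torModule (n : ℕ) (N : Type u) [AddCommGroup N] [Module A N] :
    ModuleCat A :=
  ((Tor (ModuleCat.{u} A) n).obj (ModuleCat.of A M)).obj (ModuleCat.of A N)

/-- The vanishing `Tor^A_n(M, N) = 0`. -/
def torVanish (n : ℕ) (N : Type u) [AddCommGroup N] [Module A N] : Prop :=
  Subsingleton (torModule A M n N)

noncomputable def depth : ℕ∞ :=
  sInf {c : ℕ∞ | ∃ i : ℕ, c = i ∧ ¬ extVanish A (ResidueField A) i M}

variable {A}

/-- The category of modules of *free reducible complexity* over the local ring `A`.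
It is defined inductively: every finitely generated module of finite projective
dimension has free reducible complexity, and a finitely generated module `M` of finite
positive complexity has free reducible complexity provided there is a short exact
sequence `0 → M → K → Ω^n_A(M) → 0` (necessarily induced by a cohomology element
`η ∈ Ext^{n+1}_A(M,M)`) where `K` is a finitely generated module of free reducible
complexity with `cx K = cx M - 1`. -/
inductive HasFreeRedCxCat : ModuleCat.{u} A → Prop
  | of_finite_projDim (M : ModuleCat.{u} A) (hfg : Module.Finite A M)
      (h : HasFiniteProjDim A M) : HasFreeRedCxCat M
  | step (M K S : ModuleCat.{u} A) (n : ℕ)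
      (hfg : Module.Finite A M) (hKfg : Module.Finite A K)
      (hpos : 0 < complexity A M) (hfin : complexity A M ≠ ⊤)
      (hsyz : IsSyzygyOf A M S n)
      (f : M →ₗ[A] K) (g : K →ₗ[A] S) (hses : IsSES f g)
      (hcx : complexity A K = complexity A M - 1)
      (hK : HasFreeRedCxCat K) : HasFreeRedCxCat M

/-- The category of modules of *reducible complexity* over the local ring `A`: as for
free reducible complexity, but where in addition the reductions are required to
preserve depth. -/
inductive HasRedCxCat : ModuleCat.{u} A → Prop
  | of_finite_projDim (M : ModuleCat.{u} A) (hfg : Module.Finite A M)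
      (h : HasFiniteProjDim A M) : HasRedCxCat M
  | step (M K S : ModuleCat.{u} A) (n : ℕ)
      (hfg : Module.Finite A M) (hKfg : Module.Finite A K)
      (hpos : 0 < complexity A M) (hfin : complexity A M ≠ ⊤)
      (hsyz : IsSyzygyOf A M S n)
      (f : M →ₗ[A] K) (g : K →ₗ[A] S) (hses : IsSES f g)
      (hcx : complexity A K = complexity A M - 1)
      (hdepth : depth A K = depth A M)
      (hK : HasRedCxCat K) : HasRedCxCat M

variable (A)

/-- `M` has free reducible complexity. -/
def HasFreeRedCx (M : Type u) [AddCommGroup M] [Module A M] : Prop :=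
  HasFreeRedCxCat (ModuleCat.of A M)

/-- `M` has reducible complexity. -/
def HasRedCx (M : Type u) [AddCommGroup M] [Module A M] : Prop :=
  HasRedCxCat (ModuleCat.of A M)

/-- A Noetherian local ring is Gorenstein if it has finite injective dimension over
itself; by Bass' characterization, this is equivalent to the vanishing of
`Ext^i_A(k, A)` for all sufficiently large `i`. -/
def IsGorenstein : Prop :=
  ∃ n : ℕ, ∀ i : ℕ, n < i → extVanish A (ResidueField A) i A


open CategoryTheory.Abelian

section Helpers

set_option linter.unusedSectionVars false

lemma ext_subsingleton_of_extVanish (M N : Type u) [AddCommGroup M] [Module A M]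
    [AddCommGroup N] [Module A N] (n : ℕ) (h : extVanish A M (n + 1) N) :
    Subsingleton (Abelian.Ext.{u} (ModuleCat.of A M) (ModuleCat.of A N) (n + 1)) := by
  let P := projectiveResolution (ModuleCat.of A M)
  have e := P.isoExt (R := A) (n + 1) (ModuleCat.of A N)
  have hz : Limits.IsZero ((P.complex.linearYonedaObj A (ModuleCat.of A N)).homology (n + 1)) := by
    refine Limits.IsZero.of_iso ?_ e.symm
    have : Subsingleton (((_root_.Ext A (ModuleCat.{u} A) (n + 1)).obj
      (op (ModuleCat.of A M))).obj (ModuleCat.of A N)) := h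
    exact ModuleCat.isZero_of_subsingleton _
  rw [← HomologicalComplex.exactAt_iff_isZero_homology,
    HomologicalComplex.exactAt_iff' _ n (n + 1) (n + 2) (by simp) (by simp),
    ShortComplex.moduleCat_exact_iff] at hz
  refine subsingleton_of_forall_eq 0 fun α => ?_
  obtain ⟨f, hf, rfl⟩ := P.extMk_surjective α (n + 2) rfl
  rw [P.extMk_eq_zero_iff f (n + 2) rfl hf n rfl]
  exact hz f hf

variable {A} {M : Type u} [AddCommGroup M] [Module A M]

def MinFreeRes.shift (R : MinFreeRes A M) : MinFreeRes A (LinearMap.ker R.aug) where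
  b n := R.b (n + 1)
  d n := R.d (n + 1)
  aug := (R.d 0).codRestrict _ fun x => R.exact_zero.apply_apply_eq_zero x
  aug_surjective := by
    rintro ⟨y, hy⟩
    obtain ⟨x, hx⟩ := (R.exact_zero y).1 hy
    exact ⟨x, Subtype.ext hx⟩
  exact_zero := by
    intro x
    rw [← R.exact_succ 0 x]
    exact Subtype.ext_iff
  exact_succ n := R.exact_succ (n + 1)
  minimal n := R.minimal (n + 1)

noncomputable abbrev kk (A : Type u) [CommRing A] [IsLocalRing A] : ModuleCat.{u} A :=
  ModuleCat.of A (ResidueField A)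

lemma sesR (R : MinFreeRes A M) : R.aug.shortComplexKer.ShortExact :=
  LinearMap.shortExact_shortComplexKer R.aug_surjective

instance (b : ℕ) : Projective (ModuleCat.of A (Fin b → A)) :=
  ModuleCat.projective_of_free (Pi.basisFun A (Fin b))

lemma length_kk : Module.length A (ResidueField A) = 1 := by
  rw [Module.length_eq_of_surjective (S := A) (R := ResidueField A)
    (by exact Ideal.Quotient.mk_surjective)]
  exact Module.length_eq_one _ _

lemma minimal_aug_ker (R : MinFreeRes A M) (x) (hx : R.aug x = 0) (i) : x i ∈ maximalIdeal A := by
  obtain ⟨y, rfl⟩ := (R.exact_zero x).1 hx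
  exact R.minimal 0 y i

lemma kills (b : ℕ) (f : (Fin b → A) →ₗ[A] ResidueField A) (x : Fin b → A)
    (hx : ∀ i, x i ∈ maximalIdeal A) : f x = 0 := by
  rw [LinearMap.pi_apply_eq_sum_univ f x]
  refine Finset.sum_eq_zero fun i _ => ?_
  rw [Algebra.smul_def, show algebraMap A (ResidueField A) (x i) = 0 from
    (IsLocalRing.residue_eq_zero_iff (x i)).2 (hx i), zero_mul]

lemma length_ext_zero (R : MinFreeRes A M) :
    Module.length A (Abelian.Ext.{u} (ModuleCat.of A M) (kk A) 0) = R.b 0 := by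
  rw [(Ext.linearEquiv₀ (R := A)).length_eq, (ModuleCat.homLinearEquiv (S := A)).length_eq]
  have : Function.Bijective (LinearMap.lcomp A (ResidueField A) R.aug) := by
    constructor
    · intro f g h
      ext m
      obtain ⟨x, rfl⟩ := R.aug_surjective m
      exact LinearMap.congr_fun h x
    · intro f
      have hf : LinearMap.ker R.aug ≤ LinearMap.ker f := fun x hx =>
        kills _ f x (minimal_aug_ker R x hx)
      refine ⟨(LinearMap.ker R.aug).liftQ f hf ∘ₗ
        (R.aug.quotKerEquivOfSurjective R.aug_surjective).symm.toLinearMap, ?_⟩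
      refine LinearMap.ext fun x => ?_
      have : (R.aug.quotKerEquivOfSurjective R.aug_surjective).symm (R.aug x) =
          Submodule.Quotient.mk x := by
        rw [LinearEquiv.symm_apply_eq]; rfl
      simp only [LinearMap.lcomp_apply, LinearMap.comp_apply, LinearEquiv.coe_coe]
      rw [this]
      rfl
  rw [(LinearEquiv.ofBijective _ this).length_eq,
    ← ((Pi.basisFun A (Fin (R.b 0))).constr A).length_eq]
  simp [length_kk]

lemma length_ext_succ (R : MinFreeRes A M) (n : ℕ) :
    Module.length A (Abelian.Ext.{u} (ModuleCat.of A M) (kk A) (n + 1)) =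
    Module.length A (Abelian.Ext.{u} (ModuleCat.of A (LinearMap.ker R.aug)) (kk A) n) := by
  have hS := sesR R
  have : Function.Bijective (Ext.precompOfLinear hS.extClass A (kk A) (add_comm 1 n)) := by
    constructor
    · rw [injective_iff_map_eq_zero]
      intro x hx
      obtain ⟨y, rfl⟩ := Ext.contravariant_sequence_exact₁ hS (kk A) x (add_comm 1 n) hx
      cases n with
      | succ n =>
        have : y = 0 := Ext.eq_zero_of_projective (P := ModuleCat.of A (Fin (R.b 0) → A)) y
        rw [this, Ext.comp_zero]
      | zero =>
        obtain ⟨φ, rfl⟩ := Ext.homEquiv₀.symm.surjective y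
        rw [Ext.homEquiv₀_symm_apply]
        rw [Ext.mk₀_comp_mk₀]
        have h0 : R.aug.shortComplexKer.f ≫ φ = 0 :=
          ModuleCat.hom_ext (LinearMap.ext fun z =>
            kills (R.b 0) (ModuleCat.Hom.hom φ) _ (minimal_aug_ker R _ z.2))
        rw [h0, Ext.mk₀_zero]
    · intro x
      exact Ext.contravariant_sequence_exact₃ hS (kk A) x
        (Ext.eq_zero_of_projective (P := ModuleCat.of A (Fin (R.b 0) → A)) _) (add_comm 1 n)
  exact (LinearEquiv.ofBijective _ this).length_eq.symm

lemma length_ext (R : MinFreeRes A M) (n : ℕ) :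
    Module.length A (Abelian.Ext.{u} (ModuleCat.of A M) (kk A) n) = R.b n := by
  induction n generalizing M with
  | zero => exact length_ext_zero R
  | succ n ih => rw [length_ext_succ R n, ih R.shift]; rfl

lemma b_unique (R R' : MinFreeRes A M) (n : ℕ) : R.b n = R'.b n := by
  have := (length_ext R n).symm.trans (length_ext R' n)
  exact_mod_cast this

lemma isSyzygyOf_succ {S : Type u} [AddCommGroup S] [Module A S] (n : ℕ)
    (h : IsSyzygyOf A M S (n + 1)) :
    ∃ R : MinFreeRes A M, IsSyzygyOf A (LinearMap.ker R.aug) S n := by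
  match n, h with
  | 0, h => exact h
  | 1, ⟨R, ⟨e⟩⟩ =>
    refine ⟨R, R.shift, ⟨e.trans (LinearEquiv.ofEq _ _ ?_)⟩⟩
    exact (LinearMap.ker_codRestrict _ _ _).symm
  | n + 2, ⟨R, ⟨e⟩⟩ => exact ⟨R, R.shift, ⟨e⟩⟩

lemma exists_syzygy_class {S : Type u} [AddCommGroup S] [Module A S] (n : ℕ)
    (h : IsSyzygyOf A M S n) :
    ∃ δ : Abelian.Ext.{u} (ModuleCat.of A M) (ModuleCat.of A S) n,
      ∀ (Y : ModuleCat.{u} A) (i j : ℕ) (hij : n + (i + 1) = j)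
        (z : Abelian.Ext.{u} (ModuleCat.of A S) Y (i + 1)), δ.comp z hij = 0 → z = 0 := by
  induction n generalizing M with
  | zero =>
    obtain ⟨e⟩ := h
    refine ⟨Ext.mk₀ (ModuleCat.ofHom e.symm.toLinearMap), fun Y i j hij z hz => ?_⟩
    obtain rfl : i + 1 = j := by omega
    have : (Ext.mk₀ (ModuleCat.ofHom e.toLinearMap)).comp
      ((Ext.mk₀ (ModuleCat.ofHom e.symm.toLinearMap)).comp z hij) (zero_add _) = z := by
      rw [Ext.mk₀_comp_mk₀_assoc, ← ModuleCat.ofHom_comp]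
      simp
    rw [← this, hz, Ext.comp_zero]
  | succ n ih =>
    obtain ⟨R, hR⟩ := isSyzygyOf_succ n h
    obtain ⟨δ, hδ⟩ := ih hR
    have hS := sesR R
    refine ⟨hS.extClass.comp δ (add_comm 1 n), fun Y i j hij z hz => ?_⟩
    apply hδ Y i (n + (i + 1)) rfl
    rw [Ext.comp_assoc _ _ _ _ rfl (by omega)] at hz
    obtain ⟨y, hy⟩ := Ext.contravariant_sequence_exact₁ hS Y _ _ hz
    have : y = 0 := Ext.eq_zero_of_projective (P := ModuleCat.of A (Fin (R.b 0) → A)) (n := n + i) y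
    rw [← hy, this, Ext.comp_zero]

lemma ses_of {N K S : Type u} [AddCommGroup N] [Module A N] [AddCommGroup K] [Module A K]
    [AddCommGroup S] [Module A S] {f : N →ₗ[A] K} {g : K →ₗ[A] S} (h : IsSES f g) :
    (ShortComplex.mk (ModuleCat.ofHom f) (ModuleCat.ofHom g)
      (by ext x; exact h.2.1.apply_apply_eq_zero x)).ShortExact where
  exact := by
    rw [ShortComplex.moduleCat_exact_iff]
    intro x hx
    exact (h.2.1 x).1 hx
  mono_f := (ModuleCat.mono_iff_injective _).2 h.1
  epi_g := (ModuleCat.epi_iff_surjective _).2 h.2.2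

/-- Vanishing of Ext passes from `M` to `K`. -/
lemma vanish_step {N K S : Type u} [AddCommGroup N] [Module A N] [AddCommGroup K] [Module A K]
    [AddCommGroup S] [Module A S] {f : N →ₗ[A] K} {g : K →ₗ[A] S} (h : IsSES f g) (n : ℕ)
    (hs : IsSyzygyOf A N S n) (Y : ModuleCat.{u} A)
    (hv : ∀ᶠ i in atTop, Subsingleton (Abelian.Ext.{u} (ModuleCat.of A N) Y i)) :
    ∀ᶠ i in atTop, Subsingleton (Abelian.Ext.{u} (ModuleCat.of A K) Y i) := by
  obtain ⟨δ, hδ⟩ := exists_syzygy_class n hs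
  obtain ⟨i₀, hi₀⟩ := eventually_atTop.1 hv
  refine eventually_atTop.2 ⟨i₀ + 1, fun i hi => subsingleton_of_forall_eq 0 fun x => ?_⟩
  obtain ⟨i, rfl⟩ : ∃ j, i = j + 1 := ⟨i - 1, by omega⟩
  have := hi₀ (i + 1) (by omega)
  have := hi₀ (n + (i + 1)) (by omega)
  obtain ⟨y, rfl⟩ := Ext.contravariant_sequence_exact₂ (ses_of h) Y x (Subsingleton.elim _ _)
  have : y = 0 := hδ Y i _ rfl y (Subsingleton.elim _ _)
  rw [this, Ext.comp_zero]

/-- Kernel of multiplication by a class. -/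
noncomputable abbrev kerLen {N N' : ModuleCat.{u} A} {p : ℕ} (x : Abelian.Ext.{u} N N' p) (i : ℕ) :
    ℕ∞ :=
  Module.length A (LinearMap.ker (Ext.precompOfLinear x A (kk A) (rfl : p + i = p + i)))

lemma kerLen_eq {N N' : ModuleCat.{u} A} {p : ℕ} (x : Abelian.Ext.{u} N N' p) (i c : ℕ)
    (h : p + i = c) :
    kerLen x i = Module.length A (LinearMap.ker (Ext.precompOfLinear x A (kk A) h)) := by
  subst h; rfl

lemma length_ker_comp {U V W : Type*} [AddCommGroup U] [AddCommGroup V] [AddCommGroup W]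
    [Module A U] [Module A V] [Module A W] (f : U →ₗ[A] V) (g : V →ₗ[A] W) :
    Module.length A (LinearMap.ker (g ∘ₗ f)) ≤
      Module.length A (LinearMap.ker f) + Module.length A (LinearMap.ker g) := by
  let r : LinearMap.ker (g ∘ₗ f) →ₗ[A] LinearMap.ker g :=
    f.restrict (fun x hx => hx)
  rw [Module.length_eq_add_of_exact (LinearMap.ker r).subtype r.rangeRestrict
    (Submodule.subtype_injective _) r.surjective_rangeRestrict
    (by
      intro x
      exact ⟨fun h => ⟨⟨x, congrArg Subtype.val h⟩, rfl⟩,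
        fun ⟨y, hy⟩ => Subtype.ext (hy ▸ y.2)⟩)]
  refine add_le_add ?_ (Module.length_le_of_injective (LinearMap.range r).subtype
    (Submodule.subtype_injective _))
  let q : LinearMap.ker r →ₗ[A] LinearMap.ker f :=
    ((LinearMap.ker (g ∘ₗ f)).subtype ∘ₗ (LinearMap.ker r).subtype).codRestrict _
      (fun x => congrArg Subtype.val (LinearMap.mem_ker.1 x.2))
  refine Module.length_le_of_injective q fun x y hxy => ?_
  have h1 : (q x : U) = q y := by rw [hxy]
  exact Subtype.ext (Subtype.ext h1)

lemma kerLen_comp {N N' N'' : ModuleCat.{u} A} {p q : ℕ} (x : Abelian.Ext.{u} N N' p)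
    (y : Abelian.Ext.{u} N' N'' q) (i : ℕ) :
    kerLen (x.comp y rfl) i ≤ kerLen y i + kerLen x (q + i) := by
  rw [kerLen_eq x (q + i) (p + q + i) (by omega)]
  refine le_trans (le_of_eq ?_) (length_ker_comp _ _)
  have : Ext.precompOfLinear (x.comp y rfl) A (kk A) (rfl : p + q + i = p + q + i) =
      Ext.precompOfLinear x A (kk A) (by omega : p + (q + i) = p + q + i) ∘ₗ
        Ext.precompOfLinear y A (kk A) (rfl : q + i = q + i) :=
    LinearMap.ext fun z => Ext.comp_assoc x y z rfl rfl (by omega)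
  rw [← this]

lemma exists_class {N K S : Type u} [AddCommGroup N] [Module A N] [AddCommGroup K] [Module A K]
    [AddCommGroup S] [Module A S] {f : N →ₗ[A] K} {g : K →ₗ[A] S} (h : IsSES f g) (n : ℕ)
    (hs : IsSyzygyOf A N S n) (R : MinFreeRes A K) :
    ∃ η : Abelian.Ext.{u} (ModuleCat.of A N) (ModuleCat.of A N) (n + 1),
      ∀ i, kerLen η i ≤ R.b i := by
  obtain ⟨δ, hδ⟩ := exists_syzygy_class n hs
  have hS := ses_of h
  refine ⟨δ.comp hS.extClass rfl, fun i => ?_⟩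
  rw [← length_ext R i]
  let F := Ext.precompOfLinear (Ext.mk₀ (ModuleCat.ofHom f)) A (kk A) (zero_add i)
  refine le_trans ?_ (Module.length_le_of_surjective F.rangeRestrict F.surjective_rangeRestrict)
  refine Module.length_le_of_injective (Submodule.inclusion ?_) (Submodule.inclusion_injective _)
  intro x hx
  have hx : (δ.comp hS.extClass rfl).comp x rfl = 0 := hx
  rw [Ext.comp_assoc _ _ _ _ (add_comm 1 i) (by omega)] at hx
  exact Ext.contravariant_sequence_exact₁ hS _ x _ (hδ _ _ _ _ _ hx)

lemma exists_power {N : ModuleCat.{u} A} {q : ℕ} (η : Abelian.Ext.{u} N N (q + 1))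
    (c : ℕ → ℕ) (hη : ∀ i, kerLen η i ≤ c i) (m : ℕ) :
    ∃ p, m ≤ p ∧ ∃ x : Abelian.Ext.{u} N N p,
      ∀ i, kerLen x i ≤ ((∑ j ∈ Finset.range m, c (j * (q + 1) + i) : ℕ) : ℕ∞) := by
  induction m with
  | zero =>
    refine ⟨0, le_rfl, Ext.mk₀ (𝟙 N), fun i => ?_⟩
    simp only [Finset.range_zero, Finset.sum_empty, Nat.cast_zero, nonpos_iff_eq_zero]
    rw [kerLen_eq _ i i (zero_add i), Module.length_eq_zero_iff, Submodule.subsingleton_iff_eq_bot, LinearMap.ker_eq_bot']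
    intro y hy
    have hy : (Ext.mk₀ (𝟙 N)).comp y (zero_add i) = 0 := hy
    rwa [Ext.mk₀_id_comp] at hy
  | succ m ih =>
    obtain ⟨p, hp, x, hx⟩ := ih
    refine ⟨p + (q + 1), by omega, x.comp η rfl, fun i => (kerLen_comp x η i).trans ?_⟩
    rw [Finset.sum_range_succ', add_comm]
    push_cast
    refine add_le_add ((hx _).trans (le_of_eq ?_)) ((hη i).trans (by simp))
    push_cast
    refine Finset.sum_congr rfl fun j _ => ?_
    congr 2
    ring

lemma betti_bound {N : Type u} [AddCommGroup N] [Module A N] (R : MinFreeRes A N)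
    {q : ℕ} (η : Abelian.Ext.{u} (ModuleCat.of A N) (ModuleCat.of A N) (q + 1))
    (c : ℕ → ℕ) (hη : ∀ i, kerLen η i ≤ c i)
    (hv : ∀ᶠ i in atTop,
      Subsingleton (Abelian.Ext.{u} (ModuleCat.of A N) (ModuleCat.of A N) i)) :
    ∃ m, ∀ i, R.b i ≤ ∑ j ∈ Finset.range m, c (j * (q + 1) + i) := by
  obtain ⟨m, hm⟩ := eventually_atTop.1 hv
  obtain ⟨p, hp, x, hx⟩ := exists_power η c hη m
  refine ⟨m, fun i => ?_⟩
  have := hm p hp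
  obtain rfl : x = 0 := Subsingleton.elim _ _
  have h2 := hx i
  rw [← Nat.cast_le (α := ℕ∞), ← length_ext R i]
  refine le_trans (le_of_eq ?_) h2
  have h0 : LinearMap.ker (Ext.precompOfLinear
      (0 : Abelian.Ext.{u} (ModuleCat.of A N) (ModuleCat.of A N) p) A (kk A)
        (rfl : p + i = p + i)) = ⊤ := by
    rw [eq_top_iff]
    intro z _
    exact Ext.zero_comp (C := ModuleCat.{u} A) _ _ z _ rfl
  rw [kerLen, h0, Module.length_top]

lemma cxLE_of_bound {N K : Type u} [AddCommGroup N] [Module A N] [AddCommGroup K] [Module A K]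
    (R : MinFreeRes A N) (R' : MinFreeRes A K) (m q : ℕ)
    (hb : ∀ i, R.b i ≤ ∑ j ∈ Finset.range m, R'.b (j * (q + 1) + i)) (s : ℕ)
    (h : HasComplexityLE A K s) : HasComplexityLE A N s := by
  obtain ⟨R'', a, ha⟩ := h
  have key : ∀ j : ℕ, ∃ C : ℝ, ∀ᶠ i : ℕ in atTop,
      (R'.b (j * (q + 1) + i) : ℝ) ≤ C * (i : ℝ) ^ ((s : ℤ) - 1) := by
    intro j
    set d := j * (q + 1)
    have ha' : ∀ᶠ i : ℕ in atTop, (R''.b (d + i) : ℝ) ≤ a * ((d + i : ℕ) : ℝ) ^ ((s : ℤ) - 1) :=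
      (tendsto_atTop_mono (fun i => Nat.le_add_left i d) tendsto_id).eventually ha
    refine ⟨|a| * (d + 1 : ℝ) ^ s, ?_⟩
    filter_upwards [ha', eventually_ge_atTop 1] with i hi h1
    rw [b_unique R' R'']
    refine hi.trans ?_
    have hi1 : (1 : ℝ) ≤ i := by exact_mod_cast h1
    have hd0 : (0 : ℝ) ≤ d := by positivity
    rw [mul_assoc]
    refine mul_le_mul (le_abs_self a) ?_ (by positivity) (abs_nonneg a)
    push_cast
    cases s with
    | zero =>
      simp only [Nat.cast_zero, zero_sub, zpow_neg, zpow_one, pow_zero, one_mul]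
      gcongr
      linarith
    | succ s =>
      simp only [Nat.cast_succ, add_sub_cancel_right, zpow_natCast]
      calc ((d : ℝ) + i) ^ s ≤ ((d + 1) * i) ^ s := by
            gcongr
            nlinarith
        _ = (d + 1 : ℝ) ^ s * i ^ s := mul_pow _ _ _
        _ ≤ _ := by
          gcongr
          · linarith
          · omega
  choose C hC using key
  refine ⟨R, ∑ j ∈ Finset.range m, C j, ?_⟩
  have : ∀ᶠ i : ℕ in atTop, ∀ j ∈ Finset.range m,
      (R'.b (j * (q + 1) + i) : ℝ) ≤ C j * (i : ℝ) ^ ((s : ℤ) - 1) :=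
    (Finset.eventually_all _).2 fun j _ => hC j
  filter_upwards [this] with i hi
  rw [Finset.sum_mul]
  refine le_trans ?_ (Finset.sum_le_sum hi)
  exact_mod_cast hb i

lemma cx_exists (N : Type u) [AddCommGroup N] [Module A N] (h : complexity A N ≠ ⊤) :
    ∃ s : ℕ, complexity A N = s ∧ HasComplexityLE A N s := by
  have : {c : ℕ∞ | ∃ t : ℕ, c = t ∧ HasComplexityLE A N t}.Nonempty := by
    by_contra hne
    rw [Set.not_nonempty_iff_eq_empty] at hne
    exact h (by rw [complexity, hne, sInf_empty])
  exact csInf_mem this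

lemma cx_le (N : Type u) [AddCommGroup N] [Module A N] (s : ℕ) (h : HasComplexityLE A N s) :
    complexity A N ≤ s := sInf_le ⟨s, rfl, h⟩

lemma cx_of_pd (N : Type u) [AddCommGroup N] [Module A N] (h : HasFiniteProjDim A N) :
    complexity A N = 0 := by
  obtain ⟨t, R, hR⟩ := h
  refine le_antisymm (cx_le N 0 ⟨R, 0, ?_⟩) zero_le
  filter_upwards [eventually_gt_atTop t] with n hn
  simp [hR n hn]

lemma main_aux (M : ModuleCat.{u} A) (hM : HasFreeRedCxCat M) (t : ℕ) (ht : 0 < t)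
    (h : ∀ N : ModuleCat.{u} A, Module.Finite A N → HasFreeRedCxCat N → complexity A N = t →
      ∀ᶠ i in atTop, Subsingleton (Abelian.Ext.{u} M N i)) :
    complexity A M < (t : ℕ∞) := by
  induction hM with
  | of_finite_projDim M hfg hp =>
    rw [cx_of_pd M hp]
    exact_mod_cast ht
  | step M K S n hfg hKfg hpos hfin hsyz f g hses hcx hK ih =>
    obtain ⟨s, hs, hsLE⟩ := cx_exists M hfin
    have hKfin : complexity A K ≠ ⊤ := by
      rw [hcx, hs]; exact_mod_cast ENat.natCast_ne_top (s - 1)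
    obtain ⟨r, hr, hrLE⟩ := cx_exists K hKfin
    have hrs : r = s - 1 := by
      rw [hs, hr] at hcx; exact_mod_cast hcx
    have hs0 : 0 < s := by rw [hs] at hpos; exact_mod_cast hpos
    rw [hs]
    rcases lt_trichotomy s t with hlt | heq | hgt
    · exact_mod_cast hlt
    · exfalso
      have hv := h M hfg (.step M K S n hfg hKfg hpos hfin hsyz f g hses hcx hK) (by rw [hs, heq])
      obtain ⟨R, -⟩ := hsLE
      obtain ⟨R', -⟩ := id hrLE
      obtain ⟨η, hη⟩ := exists_class hses n hsyz R'
      obtain ⟨m, hm⟩ := betti_bound R η R'.b hη hv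
      have := cx_le M r (cxLE_of_bound R R' m n hm r hrLE)
      rw [hs] at this
      have : s ≤ r := by exact_mod_cast this
      omega
    · exfalso
      have := ih fun N hN hN' hN'' => vanish_step hses n hsyz N (h N hN hN' hN'')
      rw [hr] at this
      have : r < t := by exact_mod_cast this
      omega

end Helpers

end ComplexityTest

open ComplexityTest

/-- **Theorem 3.2 (complexity test)**: let `M` be a module of free reducible complexity
over the local ring `A` and `t` a (positive) natural number. If `Ext^i_A(M,N) = 0` for
`i ≫ 0` for every module `N` of free reducible complexity with `cx N = t`, then
`cx M < t`. -/
theorem complexity_lt_of_extVanish_against_frc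
    (A : Type u) [CommRing A] [IsLocalRing A] [IsNoetherianRing A]
    (M : Type u) [AddCommGroup M] [Module A M] [Module.Finite A M]
    (hM : HasFreeRedCx A M)
    (t : ℕ) (ht : 0 < t)
    (h : ∀ (N : Type u) [AddCommGroup N] [Module A N] [Module.Finite A N],
      HasFreeRedCx A N → complexity A N = t →
        ∀ᶠ i in Filter.atTop, extVanish A M i N) :
    complexity A M < (t : ℕ∞) := by
  refine main_aux (ModuleCat.of A M) hM t ht fun N hN hN' hcx => ?_
  have := h N hN' hcx
  filter_upwards [this, eventually_ge_atTop 1] with i hi h1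
  obtain ⟨j, rfl⟩ : ∃ j, i = j + 1 := ⟨i - 1, by omega⟩
  exact ext_subsingleton_of_extVanish A M N j hi
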